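/- Let H be an n×n contraction (H*H ≤ I) and let q ∈ [2,3]. Then the map (A, B) ↦ S_{H,q}(A | B) is jointly concave on pairs of n×n positive definite matrices: for positive definite A₁, A₂, B₁, B₂ and t ∈ [0,1], S_{H,q}(tA₁ + (1−t)A₂ | tB₁ + (1−t)B₂) ≥ t·S_{H,q}(A₁ | B₁) + (1−t)·S_{H,q}(A₂ | B₂). -/

import Mathlib

open Matrix ComplexOrder

/-- Matrix logarithm of a (positive definite) Hermitian matrix, via functional calculus. -/
noncomputable def mlog {n : ℕ} (A : Matrix (Fin n) (Fin n) ℂ) : Matrix (Fin n) (Fin n) ℂ :=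
  cfc Real.log A

/-- Matrix exponential of a Hermitian matrix, via functional calculus. -/
noncomputable def mexp {n : ℕ} (A : Matrix (Fin n) (Fin n) ℂ) : Matrix (Fin n) (Fin n) ℂ :=
  cfc Real.exp A

/-- Real power of a (positive definite) Hermitian matrix, via functional calculus. -/
noncomputable def mpow {n : ℕ} (A : Matrix (Fin n) (Fin n) ℂ) (p : ℝ) : Matrix (Fin n) (Fin n) ℂ :=
  cfc (fun x : ℝ => x ^ p) A

/-- Deformed logarithm `log_q x = (x^(q-1) - 1)/(q-1)`. -/
noncomputable def logq (q x : ℝ) : ℝ := (x ^ (q - 1) - 1) / (q - 1)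

/-- Deformed exponential `exp_q x = (1 + (q-1)x)^(1/(q-1))`, with `exp_1 = exp`. -/
noncomputable def expq (q x : ℝ) : ℝ :=
  if q = 1 then Real.exp x else (1 + (q - 1) * x) ^ (1 / (q - 1))

/-- Deformed logarithm of a positive definite matrix, via functional calculus. -/
noncomputable def mlogq {n : ℕ} (q : ℝ) (A : Matrix (Fin n) (Fin n) ℂ) :
    Matrix (Fin n) (Fin n) ℂ :=
  cfc (logq q) A

/-- Deformed exponential of a Hermitian matrix, via functional calculus. -/
noncomputable def mexpq {m : ℕ} (q : ℝ) (A : Matrix (Fin m) (Fin m) ℂ) :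
    Matrix (Fin m) (Fin m) ℂ :=
  cfc (expq q) A

/-- Real part of the trace. -/
noncomputable def trRe {n : ℕ} (M : Matrix (Fin n) (Fin n) ℂ) : ℝ := (Matrix.trace M).re

/-- The reduced relative entropy `S_H(A | B) = Tr[A log A - H* A H log B - A + B]`. -/
noncomputable def SH {n : ℕ} (H A B : Matrix (Fin n) (Fin n) ℂ) : ℝ :=
  trRe (A * mlog A - Hᴴ * A * H * mlog B - A + B)

/-- The reduced Tsallis relative entropy
`S_{H,q}(A | B) = Tr[A^(2-q) log_q A - H* A^(2-q) H log_q B - A + B]`. -/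
noncomputable def STq {n : ℕ} (H : Matrix (Fin n) (Fin n) ℂ) (q : ℝ)
    (A B : Matrix (Fin n) (Fin n) ℂ) : ℝ :=
  trRe (mpow A (2 - q) * mlogq q A - Hᴴ * mpow A (2 - q) * H * mlogq q B - A + B)

/-! In bases of eigenvectors of `A` and `B`, `Re Tr[H* f(A) H g(B)] = ∑ |h i j|² f(a i) g(b j)`.
The integral representation of `x ^ p` for `0 < p < 1` turns `a ^ (-p) * b ^ (1 + p)` into a
positively weighted integral over `s > 0` of `b² / (s a + b)`. The corresponding form
`⟨H B, (s L_A + R_B)⁻¹ (H B)⟩` is a supremum of functionals that are linear in `(A, B)`, so it is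
jointly convex; hence so is `Re Tr[H* A ^ (-p) H B ^ (1 + p)]`, also for `p = 0` and `p = 1` by
continuity. This is Ando's theorem.

With `p = q - 2` and `K K* = 1 - H H*`, the entropy is a linear function of `(A, B)` minus
`(q - 1)⁻¹` times the sum of Ando's functionals of `H` at `(A, B)` and of `K` at `(A, 1)`. -/

section Convexity

open Set

variable {E : Type*} [AddCommGroup E] [Module ℝ E] {s : Set E}

theorem convexOn_ciSup {ι : Type*} [Nonempty ι] {f : ι → E → ℝ} (hs : Convex ℝ s)
    (hf : ∀ i, ConvexOn ℝ s (f i)) (hbdd : ∀ x ∈ s, BddAbove (range fun i => f i x)) :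
    ConvexOn ℝ s fun x => ⨆ i, f i x :=
  ⟨hs, fun x hx y hy _ _ ha hb hab => ciSup_le fun i =>
    ((hf i).2 hx hy ha hb hab).trans <| add_le_add
      (smul_le_smul_of_nonneg_left (le_ciSup (hbdd x hx) i) ha)
      (smul_le_smul_of_nonneg_left (le_ciSup (hbdd y hy) i) hb)⟩

theorem convexOn_of_mem_closure {X : Type*} [TopologicalSpace X] {f : X → E → ℝ} {P : Set X}
    (hs : Convex ℝ s) (hf : ∀ p ∈ P, ConvexOn ℝ s (f p))
    (hcont : ∀ x ∈ s, ContinuousOn (f · x) (closure P)) {p : X} (hp : p ∈ closure P) :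
    ConvexOn ℝ s (f p) :=
  ⟨hs, fun x hx y hy a b ha hb hab =>
    le_on_closure (fun r hr => (hf r hr).2 hx hy ha hb hab) (hcont _ (hs hx hy ha hb hab))
      (((hcont x hx).const_smul a).add ((hcont y hy).const_smul b)) hp⟩

end Convexity

section Scalar

open MeasureTheory Set

theorem two_mul_re_star_mul_sub_eq {𝕜 : Type*} [RCLike 𝕜] (w h : 𝕜) (b : ℝ) {c : ℝ} (hc : c ≠ 0) :
    2 * (RCLike.re (star w * h) * b) - ‖w‖ ^ 2 * c =
      ‖h‖ ^ 2 * (b ^ 2 / c) - c * ‖w - ((b / c : ℝ) : 𝕜) * h‖ ^ 2 := by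
  simp only [← RCLike.normSq_eq_def', RCLike.normSq_apply, RCLike.star_def, RCLike.mul_re,
    RCLike.mul_im, RCLike.conj_re, RCLike.conj_im, map_sub, RCLike.ofReal_re, RCLike.ofReal_im]
  field_simp
  ring

theorem exists_measure_rpow_neg_mul_rpow_one_add_eq_integral {p : ℝ} (hp : p ∈ Ioo (0 : ℝ) 1) :
    ∃ μ : Measure ℝ, ∀ a b : ℝ, 0 < a → 0 < b →
      IntegrableOn (fun s => s ^ (p - 1) * (b ^ 2 / (s * a + b))) (Ioi 0) μ ∧
      a ^ (-p) * b ^ (1 + p) = ∫ s in Ioi 0, s ^ (p - 1) * (b ^ 2 / (s * a + b)) ∂μ := by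
  obtain ⟨μ, hμ⟩ := Real.exists_measure_rpow_eq_integral_rpowIntegrand₀₁ hp
  refine ⟨μ, fun a b ha hb => ?_⟩
  obtain ⟨hint, hpow⟩ := hμ (b / a) (div_pos hb ha).le
  have hintegrand : EqOn (fun s => b * Real.rpowIntegrand₀₁ p s (b / a))
      (fun s => s ^ (p - 1) * (b ^ 2 / (s * a + b))) (Ioi 0) := by
    intro s (hs : 0 < s)
    dsimp only
    rw [Real.rpowIntegrand₀₁_eq_pow_div hp hs.le (by positivity)]
    field_simp
  refine ⟨IntegrableOn.congr_fun (hint.const_mul b) hintegrand measurableSet_Ioi, ?_⟩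
  calc a ^ (-p) * b ^ (1 + p) = b * (b / a) ^ p := by
        rw [Real.div_rpow hb.le ha.le, Real.rpow_neg ha.le, Real.rpow_add hb, Real.rpow_one]
        ring
    _ = ∫ s in Ioi 0, b * Real.rpowIntegrand₀₁ p s (b / a) ∂μ := by
        rw [hpow, integral_const_mul]
    _ = _ := setIntegral_congr_fun measurableSet_Ioi hintegrand

end Scalar

section Matrix

open MeasureTheory Set

variable {m n 𝕜 : Type*} [RCLike 𝕜]

theorem convex_setOf_posDef : Convex ℝ {A : Matrix m m 𝕜 | A.PosDef} := by
  intro A (hA : A.PosDef) B (hB : B.PosDef) a b ha hb hab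
  rcases ha.eq_or_lt with rfl | ha
  · obtain rfl : b = 1 := by simpa using hab
    simpa using hB
  · exact (hA.smul ha).add_posSemidef (hB.posSemidef.smul hb)

variable [Fintype m] [DecidableEq m] [Fintype n] [DecidableEq n]
  {A : Matrix m m 𝕜} {B : Matrix n n 𝕜}

/-- The matrix `U* H V`, where `U` and `V` are the unitaries of eigenvectors of `A` and `B`. -/
noncomputable def inEigenbases (hA : A.IsHermitian) (hB : B.IsHermitian) (H : Matrix m n 𝕜) :
    Matrix m n 𝕜 :=
  (hA.eigenvectorUnitary : Matrix m m 𝕜)ᴴ * H * (hB.eigenvectorUnitary : Matrix n n 𝕜)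

theorem surjective_inEigenbases (hA : A.IsHermitian) (hB : B.IsHermitian) :
    Function.Surjective (inEigenbases hA hB) := by
  intro X
  have hU := Unitary.coe_star_mul_self hA.eigenvectorUnitary
  have hV := Unitary.coe_star_mul_self hB.eigenvectorUnitary
  rw [star_eq_conjTranspose] at hU hV
  refine ⟨(hA.eigenvectorUnitary : Matrix m m 𝕜) * X * (hB.eigenvectorUnitary : Matrix n n 𝕜)ᴴ, ?_⟩
  rw [inEigenbases, Matrix.mul_assoc, Matrix.mul_assoc _ _ᴴ, hV, Matrix.mul_one,
    ← Matrix.mul_assoc, hU, Matrix.one_mul]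

theorem re_trace_conjTranspose_mul_cfc_mul_cfc (hA : A.IsHermitian) (hB : B.IsHermitian)
    (W H : Matrix m n 𝕜) (f g : ℝ → ℝ) :
    RCLike.re (trace (Wᴴ * cfc f A * H * cfc g B)) =
      ∑ i, ∑ j, RCLike.re (star (inEigenbases hA hB W i j) * inEigenbases hA hB H i j) *
        (f (hA.eigenvalues i) * g (hB.eigenvalues j)) := by
  set U : Matrix m m 𝕜 := ↑hA.eigenvectorUnitary with hU
  set V : Matrix n n 𝕜 := ↑hB.eigenvectorUnitary with hV
  set D : Matrix m m 𝕜 := diagonal (RCLike.ofReal ∘ f ∘ hA.eigenvalues) with hD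
  set E : Matrix n n 𝕜 := diagonal (RCLike.ofReal ∘ g ∘ hB.eigenvalues) with hE
  have hfA : cfc f A = U * D * Uᴴ := by
    rw [hA.cfc_eq, IsHermitian.cfc, Unitary.conjStarAlgAut_apply, star_eq_conjTranspose]
  have hgB : cfc g B = V * E * Vᴴ := by
    rw [hB.cfc_eq, IsHermitian.cfc, Unitary.conjStarAlgAut_apply, star_eq_conjTranspose]
  have htrace : trace (Wᴴ * cfc f A * H * cfc g B) =
      trace ((inEigenbases hA hB W)ᴴ * (D * inEigenbases hA hB H * E)) := by
    rw [hfA, hgB, ← Matrix.mul_assoc _ (V * E) Vᴴ, trace_mul_comm]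
    simp only [inEigenbases, ← hU, ← hV, conjTranspose_mul, conjTranspose_conjTranspose,
      Matrix.mul_assoc]
  rw [htrace, trace, Finset.sum_comm, map_sum]
  refine Finset.sum_congr rfl fun j _ => ?_
  rw [diag_apply, mul_apply, map_sum]
  refine Finset.sum_congr rfl fun i _ => ?_
  rw [hE, mul_diagonal, hD, diagonal_mul, conjTranspose_apply, ← RCLike.re_mul_ofReal]
  simp only [Function.comp_apply, RCLike.ofReal_mul]
  congr 1
  ring

theorem re_trace_conjTranspose_mul_cfc_mul_cfc_self (hA : A.IsHermitian) (hB : B.IsHermitian)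
    (H : Matrix m n 𝕜) (f g : ℝ → ℝ) :
    RCLike.re (trace (Hᴴ * cfc f A * H * cfc g B)) =
      ∑ i, ∑ j, ‖inEigenbases hA hB H i j‖ ^ 2 *
        (f (hA.eigenvalues i) * g (hB.eigenvalues j)) := by
  simp only [re_trace_conjTranspose_mul_cfc_mul_cfc hA hB, RCLike.star_def, RCLike.conj_mul,
    ← RCLike.ofReal_pow, RCLike.ofReal_re]

/-- The linear functional `(A, B) ↦ 2 Re⟨W, H B⟩ - ⟨W, s A W + W B⟩` for the trace inner product.
Its supremum over `W` is attained where `s A W + W B = H B`. -/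
noncomputable def resolventMinorant (H : Matrix m n 𝕜) (s : ℝ) (W : Matrix m n 𝕜) :
    Matrix m m 𝕜 × Matrix n n 𝕜 →ₗ[ℝ] ℝ where
  toFun AB := 2 * RCLike.re (trace (Wᴴ * H * AB.2)) - s * RCLike.re (trace (Wᴴ * AB.1 * W)) -
    RCLike.re (trace (Wᴴ * W * AB.2))
  map_add' _ _ := by
    simp only [Prod.fst_add, Prod.snd_add, Matrix.mul_add, Matrix.add_mul, trace_add, map_add]
    ring
  map_smul' _ _ := by
    simp only [Prod.smul_fst, Prod.smul_snd, Matrix.mul_smul, Matrix.smul_mul, trace_smul,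
      RCLike.smul_re, smul_eq_mul, RingHom.id_apply]
    ring

/-- The quadratic form `⟨H B, (s L_A + R_B)⁻¹ (H B)⟩` of left and right multiplication, encoded as
the supremum of its linear minorants. It takes the junk value `0` where they are unbounded. -/
noncomputable def resolventForm (H : Matrix m n 𝕜) (s : ℝ) (AB : Matrix m m 𝕜 × Matrix n n 𝕜) :
    ℝ :=
  ⨆ W, resolventMinorant H s W AB

theorem resolventMinorant_eq_sum (hA : A.IsHermitian) (hB : B.IsHermitian) (H : Matrix m n 𝕜)
    (s : ℝ) (W : Matrix m n 𝕜) :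
    resolventMinorant H s W (A, B) = ∑ i, ∑ j,
      (2 * (RCLike.re (star (inEigenbases hA hB W i j) * inEigenbases hA hB H i j) *
          hB.eigenvalues j) -
        ‖inEigenbases hA hB W i j‖ ^ 2 * (s * hA.eigenvalues i + hB.eigenvalues j)) := by
  have hWHB := re_trace_conjTranspose_mul_cfc_mul_cfc hA hB W H (fun _ => 1) id
  have hWAW := re_trace_conjTranspose_mul_cfc_mul_cfc_self hA hB W id (fun _ => 1)
  have hWWB := re_trace_conjTranspose_mul_cfc_mul_cfc_self hA hB W (fun _ => 1) id
  simp only [cfc_const_one ℝ A hA.isSelfAdjoint, cfc_const_one ℝ B hB.isSelfAdjoint,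
    cfc_id ℝ A hA.isSelfAdjoint, cfc_id ℝ B hB.isSelfAdjoint, id, one_mul,
    mul_one, Matrix.mul_one] at hWHB hWAW hWWB
  simp only [resolventMinorant, LinearMap.coe_mk, AddHom.coe_mk, hWHB, hWAW, hWWB, Finset.mul_sum,
    ← Finset.sum_sub_distrib]
  refine Finset.sum_congr rfl fun i _ => Finset.sum_congr rfl fun j _ => ?_
  ring

theorem isGreatest_range_resolventMinorant (hA : A.PosDef) (hB : B.PosDef) (H : Matrix m n 𝕜)
    {s : ℝ} (hs : 0 ≤ s) :
    IsGreatest (range fun W => resolventMinorant H s W (A, B))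
      (∑ i, ∑ j, ‖inEigenbases hA.isHermitian hB.isHermitian H i j‖ ^ 2 *
        (hB.isHermitian.eigenvalues j ^ 2 /
          (s * hA.isHermitian.eigenvalues i + hB.isHermitian.eigenvalues j))) := by
  set a := hA.isHermitian.eigenvalues
  set b := hB.isHermitian.eigenvalues
  set h := inEigenbases hA.isHermitian hB.isHermitian H
  have hc (i j) : 0 < s * a i + b j :=
    add_pos_of_nonneg_of_pos (mul_nonneg hs (hA.eigenvalues_pos i).le) (hB.eigenvalues_pos j)
  constructor
  · obtain ⟨W, hW⟩ := surjective_inEigenbases hA.isHermitian hB.isHermitian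
      (of fun i j => ((b j / (s * a i + b j) : ℝ) : 𝕜) * h i j)
    refine ⟨W, ?_⟩
    simp only [resolventMinorant_eq_sum hA.isHermitian hB.isHermitian, hW]
    refine Finset.sum_congr rfl fun i _ => Finset.sum_congr rfl fun j _ => ?_
    rw [two_mul_re_star_mul_sub_eq _ _ _ (hc i j).ne', of_apply, sub_self, norm_zero]
    ring
  · rintro _ ⟨W, rfl⟩
    simp only [resolventMinorant_eq_sum hA.isHermitian hB.isHermitian]
    refine Finset.sum_le_sum fun i _ => Finset.sum_le_sum fun j _ => ?_
    rw [two_mul_re_star_mul_sub_eq _ _ _ (hc i j).ne']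
    exact sub_le_self _ (mul_nonneg (hc i j).le (sq_nonneg _))

theorem resolventForm_eq_sum (hA : A.PosDef) (hB : B.PosDef) (H : Matrix m n 𝕜) {s : ℝ}
    (hs : 0 ≤ s) :
    resolventForm H s (A, B) =
      ∑ i, ∑ j, ‖inEigenbases hA.isHermitian hB.isHermitian H i j‖ ^ 2 *
        (hB.isHermitian.eigenvalues j ^ 2 /
          (s * hA.isHermitian.eigenvalues i + hB.isHermitian.eigenvalues j)) :=
  (isGreatest_range_resolventMinorant hA hB H hs).csSup_eq

omit [DecidableEq m] [DecidableEq n] in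
theorem convexOn_resolventForm (H : Matrix m n 𝕜) {s : ℝ} (hs : 0 ≤ s) :
    ConvexOn ℝ ({A | A.PosDef} ×ˢ {B | B.PosDef}) (resolventForm H s) := by
  classical
  have hconvex : Convex ℝ ({A : Matrix m m 𝕜 | A.PosDef} ×ˢ {B : Matrix n n 𝕜 | B.PosDef}) :=
    convex_setOf_posDef.prod convex_setOf_posDef
  exact convexOn_ciSup hconvex (fun W => (resolventMinorant H s W).convexOn hconvex)
    fun _ hAB => (isGreatest_range_resolventMinorant hAB.1 hAB.2 H hs).bddAbove

/-- Ando's trace functional `(A, B) ↦ Re Tr[H* A^(-p) H B^(1+p)]`. -/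
noncomputable def andoTrace (H : Matrix m n 𝕜) (p : ℝ) (AB : Matrix m m 𝕜 × Matrix n n 𝕜) : ℝ :=
  RCLike.re
    (trace (Hᴴ * cfc (fun x : ℝ => x ^ (-p)) AB.1 * H * cfc (fun x : ℝ => x ^ (1 + p)) AB.2))

theorem andoTrace_eq_sum (hA : A.IsHermitian) (hB : B.IsHermitian) (H : Matrix m n 𝕜) (p : ℝ) :
    andoTrace H p (A, B) = ∑ i, ∑ j, ‖inEigenbases hA hB H i j‖ ^ 2 *
      (hA.eigenvalues i ^ (-p) * hB.eigenvalues j ^ (1 + p)) :=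
  re_trace_conjTranspose_mul_cfc_mul_cfc_self hA hB H _ _

theorem continuous_andoTrace (hA : A.PosDef) (hB : B.PosDef) (H : Matrix m n 𝕜) :
    Continuous fun p => andoTrace H p (A, B) := by
  simp only [andoTrace_eq_sum hA.isHermitian hB.isHermitian]
  refine continuous_finsetSum _ fun i _ => continuous_finsetSum _ fun j _ => ?_
  have ha := Real.continuous_const_rpow (hA.eigenvalues_pos i).ne'
  have hb := Real.continuous_const_rpow (hB.eigenvalues_pos j).ne'
  fun_prop

theorem exists_measure_andoTrace_eq_integral {p : ℝ} (hp : p ∈ Ioo (0 : ℝ) 1)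
    (H : Matrix m n 𝕜) :
    ∃ μ : Measure ℝ, ∀ AB ∈ {A : Matrix m m 𝕜 | A.PosDef} ×ˢ {B | B.PosDef},
      IntegrableOn (fun s => s ^ (p - 1) * resolventForm H s AB) (Ioi 0) μ ∧
      andoTrace H p AB = ∫ s in Ioi 0, s ^ (p - 1) * resolventForm H s AB ∂μ := by
  obtain ⟨μ, hμ⟩ := exists_measure_rpow_neg_mul_rpow_one_add_eq_integral hp
  refine ⟨μ, fun ⟨A, B⟩ ⟨(hA : A.PosDef), (hB : B.PosDef)⟩ => ?_⟩
  set a := hA.isHermitian.eigenvalues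
  set b := hB.isHermitian.eigenvalues
  set h := inEigenbases hA.isHermitian hB.isHermitian H
  have hab (i j) := hμ (a i) (b j) (hA.eigenvalues_pos i) (hB.eigenvalues_pos j)
  have hint (i j) := (hab i j).1.const_mul (‖h i j‖ ^ 2)
  have hintegrand : EqOn
      (fun s => ∑ i, ∑ j, ‖h i j‖ ^ 2 * (s ^ (p - 1) * (b j ^ 2 / (s * a i + b j))))
      (fun s => s ^ (p - 1) * resolventForm H s (A, B)) (Ioi 0) := by
    intro s (hs : 0 < s)
    simp only [resolventForm_eq_sum hA hB H hs.le, Finset.mul_sum]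
    refine Finset.sum_congr rfl fun i _ => Finset.sum_congr rfl fun j _ => mul_left_comm _ _ _
  have hintsum (i) := integrable_finsetSum Finset.univ fun j _ => hint i j
  refine ⟨IntegrableOn.congr_fun (integrable_finsetSum _ fun i _ => hintsum i) hintegrand
    measurableSet_Ioi, ?_⟩
  rw [← setIntegral_congr_fun measurableSet_Ioi hintegrand,
    andoTrace_eq_sum hA.isHermitian hB.isHermitian, integral_finsetSum _ fun i _ => hintsum i]
  refine Finset.sum_congr rfl fun i _ => ?_
  rw [integral_finsetSum _ fun j _ => hint i j]
  refine Finset.sum_congr rfl fun j _ => ?_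
  rw [integral_const_mul, (hab i j).2]

theorem convexOn_andoTrace (H : Matrix m n 𝕜) {p : ℝ} (hp : p ∈ Icc (0 : ℝ) 1) :
    ConvexOn ℝ ({A | A.PosDef} ×ˢ {B | B.PosDef}) (andoTrace H p) := by
  have hconvex : Convex ℝ ({A : Matrix m m 𝕜 | A.PosDef} ×ˢ {B : Matrix n n 𝕜 | B.PosDef}) :=
    convex_setOf_posDef.prod convex_setOf_posDef
  rw [← closure_Ioo zero_ne_one] at hp
  refine convexOn_of_mem_closure hconvex (fun r hr => ?_)
    (fun AB hAB => (continuous_andoTrace hAB.1 hAB.2 H).continuousOn) hp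
  obtain ⟨μ, hμ⟩ := exists_measure_andoTrace_eq_integral hr H
  refine ConvexOn.congr ?_ fun AB hAB => (hμ AB hAB).2.symm
  refine integral_convexOn_of_integrand_ae hconvex ?_ fun AB hAB => (hμ AB hAB).1
  filter_upwards [ae_restrict_mem measurableSet_Ioi] with s (hs : 0 < s)
  exact (convexOn_resolventForm H hs.le).smul (Real.rpow_nonneg hs.le _)

omit [DecidableEq n] in
theorem convexOn_re_trace_conjTranspose_mul_cfc_rpow_neg_mul (K : Matrix m n 𝕜) {p : ℝ}
    (hp : p ∈ Icc (0 : ℝ) 1) :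
    ConvexOn ℝ {A : Matrix m m 𝕜 | A.PosDef}
      fun A => RCLike.re (trace (Kᴴ * cfc (fun x : ℝ => x ^ (-p)) A * K)) := by
  classical
  have h := (convexOn_andoTrace K hp).comp_affineMap
    ((AffineMap.id ℝ (Matrix m m 𝕜)).prod (AffineMap.const ℝ (Matrix m m 𝕜) (1 : Matrix n n 𝕜)))
  refine (h.subset (fun A hA => ⟨hA, PosDef.one⟩) convex_setOf_posDef).congr fun A _ => ?_
  simp [andoTrace, cfc_apply_one]

theorem posSemidef_one_sub_mul_conjTranspose {H : Matrix m n 𝕜}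
    (hH : (1 - Hᴴ * H).PosSemidef) : (1 - H * Hᴴ).PosSemidef := by
  have hblock : (fromBlocks 1 H Hᴴ 1).PosSemidef := by
    let _ : Invertible (1 : Matrix m m 𝕜) := invertibleOne
    exact (PosDef.fromBlocks₁₁ H 1 PosDef.one).2 (by simpa using hH)
  let _ : Invertible (1 : Matrix n n 𝕜) := invertibleOne
  simpa using (PosDef.fromBlocks₂₂ 1 H PosDef.one).1 hblock

theorem exists_mul_conjTranspose_eq_one_sub {H : Matrix m n 𝕜} (hH : (1 - Hᴴ * H).PosSemidef) :
    ∃ K : Matrix m m 𝕜, K * Kᴴ = 1 - H * Hᴴ := by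
  open scoped MatrixOrder in
  obtain ⟨K, hK⟩ := CStarAlgebra.nonneg_iff_eq_mul_star_self.1
    (posSemidef_one_sub_mul_conjTranspose hH).nonneg
  exact ⟨K, hK.symm⟩

theorem cfc_logq_eq (hA : A.IsHermitian) (q : ℝ) :
    cfc (logq q) A = (q - 1)⁻¹ • (cfc (fun x : ℝ => x ^ (q - 1)) A - 1) := by
  have hcont (f : ℝ → ℝ) : ContinuousOn f (spectrum ℝ A) := A.finite_real_spectrum.continuousOn f
  have hlogq : logq q = fun x => (q - 1)⁻¹ * (x ^ (q - 1) - 1) :=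
    funext fun x => div_eq_inv_mul _ _
  rw [hlogq, cfc_const_mul _ _ _ (hcont _), cfc_sub _ _ _ (hcont _) (hcont _),
    cfc_const_one ℝ A hA.isSelfAdjoint]

theorem cfc_rpow_mul_cfc_rpow (hA : A.PosDef) (r s : ℝ) :
    cfc (fun x : ℝ => x ^ r) A * cfc (fun x : ℝ => x ^ s) A = cfc (fun x : ℝ => x ^ (r + s)) A := by
  rw [← cfc_mul _ _ _ (A.finite_real_spectrum.continuousOn _)
    (A.finite_real_spectrum.continuousOn _)]
  refine cfc_congr fun x hx => ?_
  obtain ⟨i, rfl⟩ := hA.isHermitian.spectrum_real_eq_range_eigenvalues ▸ hx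
  exact (Real.rpow_add (hA.eigenvalues_pos i) r s).symm

/-- The reduced Tsallis relative entropy `S_{H,q}(A | B)` for a rectangular `H` over `ℝ` or `ℂ`.
The trace is split because `A` and `B` may have different sizes. -/
noncomputable def tsallisRelEntropy (H : Matrix m n 𝕜) (q : ℝ) (A : Matrix m m 𝕜)
    (B : Matrix n n 𝕜) : ℝ :=
  RCLike.re (trace (cfc (fun x : ℝ => x ^ (2 - q)) A * cfc (logq q) A) -
    trace (Hᴴ * cfc (fun x : ℝ => x ^ (2 - q)) A * H * cfc (logq q) B) - trace A + trace B)

theorem tsallisRelEntropy_eq {H : Matrix m n 𝕜} {K : Matrix m m 𝕜} (hK : K * Kᴴ = 1 - H * Hᴴ)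
    (hA : A.PosDef) (hB : B.PosDef) (q : ℝ) :
    tsallisRelEntropy H q A B =
      ((q - 1)⁻¹ - 1) * RCLike.re (trace A) + RCLike.re (trace B) - (q - 1)⁻¹ *
        (andoTrace H (q - 2) (A, B) +
          RCLike.re (trace (Kᴴ * cfc (fun x : ℝ => x ^ (-(q - 2))) A * K))) := by
  have htraceK (P : Matrix m m 𝕜) : trace (Kᴴ * P * K) = trace P - trace (Hᴴ * P * H) := by
    rw [trace_mul_cycle, hK, Matrix.sub_mul, Matrix.one_mul, trace_sub, ← trace_mul_cycle]
  have hpow : cfc (fun x : ℝ => x ^ (2 - q)) A * cfc (fun x : ℝ => x ^ (q - 1)) A = A := by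
    rw [cfc_rpow_mul_cfc_rpow hA, show 2 - q + (q - 1) = 1 by ring]
    simp only [Real.rpow_one, cfc_id' ℝ A hA.isHermitian.isSelfAdjoint]
  rw [andoTrace, neg_sub, show 1 + (q - 2) = q - 1 by ring, htraceK, tsallisRelEntropy,
    cfc_logq_eq hA.isHermitian, cfc_logq_eq hB.isHermitian]
  simp only [Matrix.mul_smul, Matrix.mul_sub, Matrix.mul_one, hpow, trace_sub, trace_smul, map_add,
    map_sub, RCLike.smul_re]
  ring

theorem stmt5_general (H : Matrix m n 𝕜) (hH : (1 - Hᴴ * H).PosSemidef) {q : ℝ}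
    (hq : q ∈ Icc (2 : ℝ) 3) :
    ConcaveOn ℝ ({A | A.PosDef} ×ˢ {B | B.PosDef}) fun AB => tsallisRelEntropy H q AB.1 AB.2 := by
  obtain ⟨K, hK⟩ := exists_mul_conjTranspose_eq_one_sub hH
  have hp : q - 2 ∈ Icc (0 : ℝ) 1 := ⟨by linarith [hq.1], by linarith [hq.2]⟩
  have hAndo := convexOn_andoTrace H hp
  have hconvexK := ((convexOn_re_trace_conjTranspose_mul_cfc_rpow_neg_mul K hp).comp_linearMap
    (LinearMap.fst ℝ _ (Matrix n n 𝕜))).subset (fun _ h => h.1) hAndo.1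
  let L : Matrix m m 𝕜 × Matrix n n 𝕜 →ₗ[ℝ] ℝ :=
    (((q - 1)⁻¹ - 1) • (RCLike.reLm ∘ₗ traceLinearMap m ℝ 𝕜)).coprod
      (RCLike.reLm ∘ₗ traceLinearMap n ℝ 𝕜)
  have hq' : 0 ≤ (q - 1)⁻¹ := inv_nonneg.2 (by linarith [hq.1])
  exact ((L.concaveOn hAndo.1).sub ((hAndo.add hconvexK).smul hq')).congr fun AB hAB =>
    (tsallisRelEntropy_eq hK hAB.1 hAB.2 q).symm

end Matrix

theorem STq_eq_tsallisRelEntropy {n : ℕ} (H : Matrix (Fin n) (Fin n) ℂ) (q : ℝ)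
    (A B : Matrix (Fin n) (Fin n) ℂ) : STq H q A B = tsallisRelEntropy H q A B := by
  simp only [STq, trRe, mpow, mlogq, tsallisRelEntropy, trace_add, trace_sub]
  rfl

/-- Joint concavity of the reduced Tsallis relative entropy for q ∈ [2,3]. -/
theorem stmt5 {n : ℕ} (H : Matrix (Fin n) (Fin n) ℂ) (hH : (1 - Hᴴ * H).PosSemidef)
    (q : ℝ) (hq : q ∈ Set.Icc (2 : ℝ) 3)
    (A₁ A₂ B₁ B₂ : Matrix (Fin n) (Fin n) ℂ)
    (hA₁ : A₁.PosDef) (hA₂ : A₂.PosDef) (hB₁ : B₁.PosDef) (hB₂ : B₂.PosDef)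
    (t : ℝ) (ht : t ∈ Set.Icc (0 : ℝ) 1) :
    STq H q (t • A₁ + (1 - t) • A₂) (t • B₁ + (1 - t) • B₂)
      ≥ t * STq H q A₁ B₁ + (1 - t) * STq H q A₂ B₂ := by
  simp only [STq_eq_tsallisRelEntropy]
  exact (stmt5_general H hH hq).2 (x := (A₁, B₁)) ⟨hA₁, hB₁⟩ (y := (A₂, B₂)) ⟨hA₂, hB₂⟩
    ht.1 (sub_nonneg.2 ht.2) (add_sub_cancel _ _)
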